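/- Let D, d, d_e be natural numbers with 1 ≤ d_e, d_e ≤ d and d_e < D, let U be a D×d_e real matrix and V a D×(D−d_e) real matrix with UᵀU = I, VᵀV = I and UᵀV = 0, let p, x* ∈ ℝ^D with z* := Uᵀ(x* − p) ≠ 0, and let μ be the Gaussian matrix measure on D×d real matrices. For a matrix A set B = Uᵀ A, y₂*(A) = Bᵀ(B Bᵀ)⁻¹ z*, and w(A) = Vᵀ(A y₂*(A)) ∈ ℝ^{D−d_e}. Then w has a spherical distribution: for every (D−d_e)×(D−d_e) real orthogonal matrix S (SᵀS = I), the pushforward of μ under A ↦ S·w(A) equals the pushforward of μ under A ↦ w(A). -/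

import Mathlib

/-!
The Gaussian matrix measure is invariant under `A ↦ Q * A` for every orthogonal `Q`
(`map_leftMul_gaussMatrix`). Given an orthogonal `S`, take `Q = 1 + V (S - 1) Vᵀ`. From `VᵀV = 1`,
`UᵀV = 0` and `SᵀS = 1` it follows that `QᵀQ = 1`, `UᵀQ = Uᵀ` and `VᵀQ = S Vᵀ`. Hence replacing `A`
by `Q * A` leaves `B = Uᵀ A`, and with it `Bᵀ (B Bᵀ)⁻¹ z`, unchanged, while `w (Q * A) = S (w A)`.
The laws of `S w` and `w` therefore coincide.

Nothing is needed about the invertibility of `B Bᵀ`, nor about the measurability of `w`, because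
`A ↦ Q * A` is a measurable equivalence.
-/

open Matrix MeasureTheory ProbabilityTheory

/-- The Gaussian matrix measure on `D × d` real matrices: all entries i.i.d. `N(0,1)`. -/
noncomputable def gaussMatrix (D d : ℕ) : Measure (Fin D → Fin d → ℝ) :=
  Measure.pi fun _ => Measure.pi fun _ => gaussianReal 0 1

theorem measurable_mulVec {ι : Type*} [Fintype ι] (M : Matrix ι ι ℝ) :
    Measurable fun x : ι → ℝ => M *ᵥ x :=
  (Continuous.matrix_mulVec continuous_const continuous_id).measurable

/-- The standard Gaussian measure on `ι → ℝ` is invariant under orthogonal matrices: `M` acts on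
`EuclideanSpace ℝ ι` as a linear isometry, and `stdGaussian` is invariant under those. -/
theorem map_mulVec_pi_gaussianReal {ι : Type*} [Fintype ι] [DecidableEq ι]
    (M : Matrix ι ι ℝ) (hM : Mᵀ * M = 1) :
    (Measure.pi fun _ : ι => gaussianReal 0 1).map (fun x => M *ᵥ x) =
      Measure.pi fun _ : ι => gaussianReal 0 1 := by
  have hM' : M ∈ Matrix.unitaryGroup ι ℝ := by
    rw [Matrix.mem_unitaryGroup_iff', Matrix.star_eq_conjTranspose,
      Matrix.conjTranspose_eq_transpose_of_trivial, hM]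
  let e : EuclideanSpace ℝ ι ≃ₗᵢ[ℝ] EuclideanSpace ℝ ι :=
    Unitary.linearIsometryEquiv ⟨_, Unitary.map_mem (Matrix.toEuclideanCLM (n := ι) (𝕜 := ℝ)) hM'⟩
  have hP : (Measure.pi fun _ : ι => gaussianReal 0 1) =
      (stdGaussian (EuclideanSpace ℝ ι)).map WithLp.ofLp := by
    rw [← map_pi_eq_stdGaussian, Measure.map_map (by fun_prop) (by fun_prop)]
    exact Measure.map_id.symm
  rw [hP, Measure.map_map (measurable_mulVec M) (by fun_prop)]
  conv_rhs => rw [← stdGaussian_map e, Measure.map_map (by fun_prop) (by fun_prop)]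
  rfl

/-- Left multiplication by `Q` as a map on raw arrays, the type carrying `gaussMatrix`
(`Matrix` itself has no `MeasurableSpace` instance). -/
def leftMul {D : ℕ} (d : ℕ) (Q : Matrix (Fin D) (Fin D) ℝ) (A : Fin D → Fin d → ℝ) :
    Fin D → Fin d → ℝ :=
  Matrix.of.symm (Q * Matrix.of A)

theorem measurable_leftMul {D : ℕ} (d : ℕ) (Q : Matrix (Fin D) (Fin D) ℝ) :
    Measurable (leftMul d Q) :=
  measurable_pi_lambda _ fun i => measurable_pi_lambda _ fun j => by
    simp only [leftMul, Matrix.of_symm_apply, Matrix.mul_apply, Matrix.of_apply]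
    fun_prop

theorem leftMul_leftMul_of_mul_eq_one {D d : ℕ} {P Q : Matrix (Fin D) (Fin D) ℝ}
    (h : P * Q = 1) (A : Fin D → Fin d → ℝ) : leftMul d P (leftMul d Q A) = A := by
  change Matrix.of.symm (P * (Q * Matrix.of A)) = A
  rw [← Matrix.mul_assoc, h, Matrix.one_mul]
  rfl

theorem gaussMatrix_eq_map_curry (D d : ℕ) :
    gaussMatrix D d =
      (Measure.pi fun _ : Fin D × Fin d => gaussianReal 0 1).map Function.curry := by
  have h := Measure.infinitePi_map_curry (fun (_ : Fin D) (_ : Fin d) => gaussianReal 0 1)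
  simp only [Measure.infinitePi_eq_pi] at h
  exact h.symm

/-- Flattening `D × d` arrays to vectors indexed by pairs turns `A ↦ Q * A` into the action of the
orthogonal matrix `Q ⊗ 1`, so the vector case applies. -/
theorem map_leftMul_gaussMatrix (D d : ℕ) (Q : Matrix (Fin D) (Fin D) ℝ) (hQ : Qᵀ * Q = 1) :
    (gaussMatrix D d).map (leftMul d Q) = gaussMatrix D d := by
  have hcurry : Measurable (Function.curry : (Fin D × Fin d → ℝ) → Fin D → Fin d → ℝ) := by
    fun_prop
  have hK : (Matrix.kroneckerMap (· * ·) Q (1 : Matrix (Fin d) (Fin d) ℝ))ᵀ *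
      Matrix.kroneckerMap (· * ·) Q (1 : Matrix (Fin d) (Fin d) ℝ) = 1 := by
    rw [← Matrix.kroneckerMap_transpose, ← Matrix.mul_kronecker_mul, hQ]
    simp
  rw [gaussMatrix_eq_map_curry, Measure.map_map (measurable_leftMul d Q) hcurry]
  conv_rhs => rw [← map_mulVec_pi_gaussianReal _ hK, Measure.map_map hcurry (measurable_mulVec _)]
  congr 1
  ext x i j
  simp [leftMul, Matrix.mul_apply, Matrix.mulVec, dotProduct, Fintype.sum_prod_type, Matrix.one_apply]

/-- The random vector `w(A) = Vᵀ A y₂*(A)` has a spherical distribution: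
its law is invariant under every orthogonal transformation `S`. -/
theorem stmt13 (D d d_e : ℕ) (h1 : 1 ≤ d_e) (h2 : d_e ≤ d) (h3 : d_e < D)
    (U : Matrix (Fin D) (Fin d_e) ℝ) (V : Matrix (Fin D) (Fin (D - d_e)) ℝ)
    (hU : Uᵀ * U = 1) (hV : Vᵀ * V = 1) (hUV : Uᵀ * V = 0)
    (p xstar : Fin D → ℝ)
    (zstar : Fin d_e → ℝ) (hz : zstar = Uᵀ.mulVec (xstar - p)) (hz0 : zstar ≠ 0)
    (w : (Fin D → Fin d → ℝ) → (Fin (D - d_e) → ℝ))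
    (hw : w = fun A => Vᵀ.mulVec ((Matrix.of A).mulVec
      ((Uᵀ * Matrix.of A)ᵀ.mulVec
        (((Uᵀ * Matrix.of A) * (Uᵀ * Matrix.of A)ᵀ)⁻¹.mulVec zstar))))
    (S : Matrix (Fin (D - d_e)) (Fin (D - d_e)) ℝ) (hS : Sᵀ * S = 1) :
    (gaussMatrix D d).map (fun A => S.mulVec (w A)) =
      (gaussMatrix D d).map w := by
  -- `Q` acts as `S` on the range of `V` and as the identity on its orthogonal complement.
  set Q : Matrix (Fin D) (Fin D) ℝ := 1 + V * (S - 1) * Vᵀ with hQdef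
  have hUQ : Uᵀ * Q = Uᵀ := by
    rw [hQdef, Matrix.mul_add, Matrix.mul_assoc V, ← Matrix.mul_assoc Uᵀ V, hUV]
    simp
  have hVQ : Vᵀ * Q = S * Vᵀ := by
    rw [hQdef, Matrix.mul_add, Matrix.mul_assoc V, ← Matrix.mul_assoc Vᵀ V, hV]
    simp [Matrix.sub_mul]
  have hQT : Qᵀ = 1 + V * (Sᵀ - 1) * Vᵀ := by
    simp [hQdef, Matrix.transpose_mul, Matrix.mul_assoc]
  have hQ : Qᵀ * Q = 1 := by
    rw [hQT, Matrix.add_mul, Matrix.mul_assoc _ Vᵀ Q, hVQ, ← Matrix.mul_assoc,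
      Matrix.mul_assoc V, Matrix.sub_mul, hS, hQdef, Matrix.one_mul, Matrix.one_mul, add_assoc, ← Matrix.add_mul,
      ← Matrix.mul_add]
    simp
  have hQ' : Q * Qᵀ = 1 := mul_eq_one_comm.mp hQ
  let e : (Fin D → Fin d → ℝ) ≃ᵐ (Fin D → Fin d → ℝ) :=
    { toFun := leftMul d Q
      invFun := leftMul d Qᵀ
      left_inv := leftMul_leftMul_of_mul_eq_one hQ
      right_inv := leftMul_leftMul_of_mul_eq_one hQ'
      measurable_toFun := measurable_leftMul d Q
      measurable_invFun := measurable_leftMul d Qᵀ }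
  have hwe : (fun A => S *ᵥ w A) = w ∘ e := by
    funext A
    have hof : Matrix.of (e A) = Q * Matrix.of A := rfl
    have hB : Uᵀ * Matrix.of (e A) = Uᵀ * Matrix.of A := by
      rw [hof, ← Matrix.mul_assoc, hUQ]
    simp only [hw, Function.comp_apply, hB]
    simp only [hof, Matrix.mulVec_mulVec, ← Matrix.mul_assoc, hVQ]
  have he : (gaussMatrix D d).map e = gaussMatrix D d := map_leftMul_gaussMatrix D d Q hQ
  rw [hwe]
  -- Since `e` is a measurable equivalence, `w ∘ e` is a.e. measurable exactly when `w` is;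
  -- otherwise both pushforwards are `0` by convention.
  by_cases hm : AEMeasurable w (gaussMatrix D d)
  · rw [← AEMeasurable.map_map_of_aemeasurable (by rwa [he]) e.measurable.aemeasurable, he]
  · rw [Measure.map_of_not_aemeasurable hm, Measure.map_of_not_aemeasurable]
    rwa [← e.measurableEmbedding.aemeasurable_map_iff, he]
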